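/- Fix constants 0 < δ ≤ Δ. For every Alice value density v_A there exists a deterministic Alice strategy S_A for the repeated 2-cut game, independent of the parameters α and c below, such that: for every α < 1 and every c > 0 there exist C > 0 and T₀ ∈ ℕ with the property that for every Bob value density v_B, every deterministic Bob strategy that guarantees regret at most c·T'^α for every horizon T', and every horizon T ≥ T₀, Alice's Stackelberg regret under S_A over horizon T is at most C·T/log T. -/

import Mathlib

open MeasureTheory Set

noncomputable section

attribute [local instance] Classical.propDecidable

/-- A value density: measurable, bounded in `[δ, Δ]` on `[0,1]`, integrating to 1 on `[0,1]`. -/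
def IsValueDensity (δ Δ : ℝ) (v : ℝ → ℝ) : Prop :=
  Measurable v ∧ (∀ x ∈ Set.Icc (0:ℝ) 1, v x ∈ Set.Icc δ Δ) ∧
    (∫ x in Set.Icc (0:ℝ) 1, v x) = 1

/-- The value of a piece `S` under density `v`. -/
def pieceVal (v : ℝ → ℝ) (S : Set ℝ) : ℝ := ∫ x in S, v x

/-- Extended cut points: `0, c 0, …, c (k-1), 1`. -/
def extCuts (k : ℕ) (c : Fin k → ℝ) : ℕ → ℝ := fun i =>
  if i = 0 then 0 else if h : i - 1 < k then c ⟨i - 1, h⟩ else 1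

/-- A valid vector of `k` cut points: nondecreasing, within `[0,1]`. -/
def ValidCuts (k : ℕ) (c : Fin k → ℝ) : Prop :=
  Monotone c ∧ ∀ i, c i ∈ Set.Icc (0:ℝ) 1

/-- The two pieces of the alternating partition induced by cuts `c`:
`true` gives the union of even-indexed intervals, `false` the odd-indexed ones. -/
def altPiece (k : ℕ) (c : Fin k → ℝ) (b : Bool) : Set ℝ :=
  ⋃ i ∈ Finset.range (k + 1),
    if decide (i % 2 = 0) = b then Set.Icc (extCuts k c i) (extCuts k c (i + 1)) else ∅

/-- Alice's Stackelberg value with `k` cuts: max of `V_A(Z_A)` over alternating partitions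
`(Z_A, Z_B)` induced by `k` cut points with `V_B(Z_B) ≥ 1/2`. -/
def stackelbergValue (k : ℕ) (vA vB : ℝ → ℝ) : ℝ :=
  sSup { u : ℝ | ∃ (c : Fin k → ℝ) (b : Bool), ValidCuts k c ∧
    1 / 2 ≤ pieceVal vB (altPiece k c (!b)) ∧ u = pieceVal vA (altPiece k c b) }

/-- A history of play: the list of (Alice's cuts, Bob's choice) in past rounds. -/
abbrev Hist (k : ℕ) := List ((Fin k → ℝ) × Bool)

/-- Alice's deterministic strategy: horizon and history ↦ next cut vector. -/
abbrev AliceStrategy (k : ℕ) := ℕ → Hist k → (Fin k → ℝ)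

/-- Bob's deterministic strategy: horizon, history, and Alice's current cuts ↦ choice. -/
abbrev BobStrategy (k : ℕ) := ℕ → Hist k → (Fin k → ℝ) → Bool

/-- The history of play after `t` rounds. -/
def playHist (k : ℕ) (SA : AliceStrategy k) (SB : BobStrategy k) (T : ℕ) : ℕ → Hist k
  | 0 => []
  | t + 1 =>
      let h := playHist k SA SB T t
      let cuts := SA T h
      h ++ [(cuts, SB T h cuts)]

/-- Alice's cuts in round `t` (0-indexed). -/
def roundCuts (k : ℕ) (SA : AliceStrategy k) (SB : BobStrategy k) (T t : ℕ) : Fin k → ℝ :=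
  SA T (playHist k SA SB T t)

/-- Bob's choice in round `t` (0-indexed). -/
def roundChoice (k : ℕ) (SA : AliceStrategy k) (SB : BobStrategy k) (T t : ℕ) : Bool :=
  SB T (playHist k SA SB T t) (roundCuts k SA SB T t)

/-- Alice's Stackelberg regret over horizon `T`: in each round she receives the value of
the piece Bob did not choose. -/
def aliceRegret (k : ℕ) (vA vB : ℝ → ℝ) (SA : AliceStrategy k) (SB : BobStrategy k)
    (T : ℕ) : ℝ :=
  ∑ t ∈ Finset.range T,
    (stackelbergValue k vA vB -
      pieceVal vA (altPiece k (roundCuts k SA SB T t) (!(roundChoice k SA SB T t))))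

/-- Bob's regret over horizon `T` relative to always choosing his preferred piece. -/
def bobRegret (k : ℕ) (vB : ℝ → ℝ) (SA : AliceStrategy k) (SB : BobStrategy k) (T : ℕ) : ℝ :=
  ∑ t ∈ Finset.range T,
    (max (pieceVal vB (altPiece k (roundCuts k SA SB T t) true))
        (pieceVal vB (altPiece k (roundCuts k SA SB T t) false)) -
      pieceVal vB (altPiece k (roundCuts k SA SB T t) (roundChoice k SA SB T t)))

/-- Bob's strategy guarantees regret at most `R T` against every Alice strategy and horizon. -/
def BobGuarantees (k : ℕ) (vB : ℝ → ℝ) (SB : BobStrategy k) (R : ℕ → ℝ) : Prop :=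
  ∀ (SA : AliceStrategy k) (T : ℕ), bobRegret k vB SA SB T ≤ R T

/-- The myopic Bob: chooses the piece of larger `V_B`-value, breaking ties towards
the piece of smaller `V_A`-value. -/
def myopicBob (k : ℕ) (vA vB : ℝ → ℝ) : BobStrategy k := fun _ _ c =>
  if pieceVal vB (altPiece k c false) < pieceVal vB (altPiece k c true) then true
  else if pieceVal vB (altPiece k c true) < pieceVal vB (altPiece k c false) then false
  else if pieceVal vA (altPiece k c true) ≤ pieceVal vA (altPiece k c false) then true
  else false

/-- Alice's strategy always produces valid cut vectors. -/
def AliceValid (k : ℕ) (SA : AliceStrategy k) : Prop := ∀ T h, ValidCuts k (SA T h)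

/-!
Rounding the cuts of an allocation to the grid of mesh `1 / n`, so that the intervals of Alice's
piece shrink by about a mesh step, costs Alice `O(1 / n)` and leaves Bob strictly more than half of
the cake: his piece then exceeds hers by at least `2 * δ / n`, which is what he loses by refusing
it. A Bob whose regret is `o(T / log ^ (k + 2) T)` therefore refuses each rounded Stackelberg offer
fewer than `m ≈ T / n ^ (k + 1)` times, although Alice does not know which offers these are. Hence
she always makes the grid offer best for herself among those refused fewer than `m` times so far.
It is at least as good for her as the rounded Stackelberg offer, so an accepted round costs her
`O(1 / n)`, and at most `m` rounds are lost on each of the `O(n ^ k)` grid offers. With `n ≈ log T`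
both losses are `O(T / log T)`.
-/

namespace IsValueDensity

variable {δ δ' Δ : ℝ} {v : ℝ → ℝ} {x y : ℝ}

theorem mono_left (h : IsValueDensity δ Δ v) (hδ : δ' ≤ δ) : IsValueDensity δ' Δ v :=
  ⟨h.1, fun x hx => ⟨hδ.trans (h.2.1 x hx).1, (h.2.1 x hx).2⟩, h.2.2⟩

theorem le_upper (h : IsValueDensity δ Δ v) : δ ≤ Δ :=
  nonempty_Icc.1 ⟨v 0, h.2.1 0 (left_mem_Icc.2 zero_le_one)⟩

theorem integrableOn (h : IsValueDensity δ Δ v) : IntegrableOn v (Icc 0 1) := by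
  refine Measure.integrableOn_of_bounded (M := max |δ| |Δ|) (by simp) h.1.aestronglyMeasurable ?_
  filter_upwards [ae_restrict_mem measurableSet_Icc] with x hx
  exact abs_le_max_abs_abs (h.2.1 x hx).1 (h.2.1 x hx).2

theorem intervalIntegrable (h : IsValueDensity δ Δ v) (hx : x ∈ Icc 0 1) (hy : y ∈ Icc 0 1) :
    IntervalIntegrable v volume x y :=
  (h.integrableOn.mono_set (uIcc_subset_Icc hx hy)).intervalIntegrable

theorem mul_sub_le_integral (h : IsValueDensity δ Δ v) (hx : 0 ≤ x) (hxy : x ≤ y) (hy : y ≤ 1) :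
    δ * (y - x) ≤ ∫ t in x..y, v t := by
  calc δ * (y - x) = ∫ _ in x..y, δ := by
        rw [intervalIntegral.integral_const, smul_eq_mul, mul_comm]
    _ ≤ ∫ t in x..y, v t :=
        intervalIntegral.integral_mono_on hxy intervalIntegrable_const
          (h.intervalIntegrable ⟨hx, hxy.trans hy⟩ ⟨hx.trans hxy, hy⟩)
          fun t ht => (h.2.1 t ⟨hx.trans ht.1, ht.2.trans hy⟩).1

theorem integral_le_mul_sub (h : IsValueDensity δ Δ v) (hx : 0 ≤ x) (hxy : x ≤ y) (hy : y ≤ 1) :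
    ∫ t in x..y, v t ≤ Δ * (y - x) := by
  calc ∫ t in x..y, v t ≤ ∫ _ in x..y, Δ :=
        intervalIntegral.integral_mono_on hxy
          (h.intervalIntegrable ⟨hx, hxy.trans hy⟩ ⟨hx.trans hxy, hy⟩) intervalIntegrable_const
          fun t ht => (h.2.1 t ⟨hx.trans ht.1, ht.2.trans hy⟩).2
    _ = Δ * (y - x) := by rw [intervalIntegral.integral_const, smul_eq_mul, mul_comm]

theorem integral_nonneg (h : IsValueDensity 0 Δ v) (hx : 0 ≤ x) (hxy : x ≤ y) (hy : y ≤ 1) :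
    0 ≤ ∫ t in x..y, v t := by
  simpa only [zero_mul] using h.mul_sub_le_integral hx hxy hy

theorem integral_zero_one (h : IsValueDensity δ Δ v) : ∫ t in (0 : ℝ)..1, v t = 1 := by
  rw [intervalIntegral.integral_of_le zero_le_one, ← integral_Icc_eq_integral_Ioc, h.2.2]

theorem integral_eq_add_add (h : IsValueDensity δ Δ v) {x' y' : ℝ} (hx : 0 ≤ x) (hx' : x ≤ x')
    (hxy' : x' ≤ y') (hy' : y' ≤ y) (hy : y ≤ 1) :
    ∫ t in x..y, v t = (∫ t in x..x', v t) + (∫ t in x'..y', v t) + ∫ t in y'..y, v t := by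
  have mem_x : x ∈ Icc 0 1 := ⟨hx, by linarith⟩
  have mem_x' : x' ∈ Icc 0 1 := ⟨by linarith, by linarith⟩
  have mem_y' : y' ∈ Icc 0 1 := ⟨by linarith, by linarith⟩
  have mem_y : y ∈ Icc 0 1 := ⟨by linarith, hy⟩
  rw [intervalIntegral.integral_add_adjacent_intervals (h.intervalIntegrable mem_x mem_x')
      (h.intervalIntegrable mem_x' mem_y'),
    intervalIntegral.integral_add_adjacent_intervals (h.intervalIntegrable mem_x mem_y')
      (h.intervalIntegrable mem_y' mem_y)]

end IsValueDensity

section Pieces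

variable {k : ℕ} {c : Fin k → ℝ} {δ Δ : ℝ} {v : ℝ → ℝ}

theorem extCuts_zero : extCuts k c 0 = 0 := if_pos rfl

theorem extCuts_succ (i : Fin k) : extCuts k c (i + 1) = c i := by simp [extCuts]

theorem extCuts_of_lt {i : ℕ} (hi : k < i) : extCuts k c i = 1 := by
  rw [extCuts, if_neg (by omega), dif_neg (by omega)]

theorem ValidCuts.extCuts_mem_Icc (hc : ValidCuts k c) (i : ℕ) : extCuts k c i ∈ Icc 0 1 := by
  unfold extCuts
  split_ifs with h0 hi
  · exact left_mem_Icc.2 zero_le_one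
  · exact hc.2 _
  · exact right_mem_Icc.2 zero_le_one

theorem ValidCuts.extCuts_monotone (hc : ValidCuts k c) : Monotone (extCuts k c) := by
  refine monotone_nat_of_le_succ fun i => ?_
  rcases Nat.eq_zero_or_pos i with rfl | hpos
  · exact extCuts_zero.trans_le (hc.extCuts_mem_Icc 1).1
  rcases lt_or_ge i k with hi | hi
  · obtain ⟨j, rfl⟩ := Nat.exists_eq_add_of_lt hpos
    simp only [zero_add]
    rw [extCuts_succ ⟨j, by omega⟩, extCuts_succ ⟨j + 1, by omega⟩]
    exact hc.1 (Fin.mk_le_mk.2 j.le_succ)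
  · exact (hc.extCuts_mem_Icc i).2.trans_eq (extCuts_of_lt (by omega)).symm

theorem validCuts_zero : ValidCuts k 0 :=
  ⟨monotone_const, fun _ => left_mem_Icc.2 zero_le_one⟩

/-- The indices `i ≤ k` of the intervals `[x_i, x_{i+1}]` that make up `altPiece k c b`. -/
def pieceIndices (k : ℕ) (b : Bool) : Finset ℕ :=
  {i ∈ Finset.range (k + 1) | decide (i % 2 = 0) = b}

theorem lt_of_mem_pieceIndices {i : ℕ} {b : Bool} (hi : i ∈ pieceIndices k b) : i < k + 1 :=
  Finset.mem_range.1 (Finset.mem_filter.1 hi).1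

theorem altPiece_eq_biUnion (c : Fin k → ℝ) (b : Bool) :
    altPiece k c b = ⋃ i ∈ pieceIndices k b, Icc (extCuts k c i) (extCuts k c (i + 1)) := by
  ext x
  simp only [altPiece, pieceIndices, mem_iUnion, Finset.mem_filter, mem_ite_empty_right,
    exists_prop, and_assoc]

theorem pieceVal_altPiece (hv : IsValueDensity δ Δ v) (hc : ValidCuts k c) (b : Bool) :
    pieceVal v (altPiece k c b) =
      ∑ i ∈ pieceIndices k b, ∫ x in extCuts k c i..extCuts k c (i + 1), v x := by
  have hIoc : altPiece k c b =ᵐ[volume]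
      ⋃ i ∈ pieceIndices k b, Ioc (extCuts k c i) (extCuts k c (i + 1)) := by
    rw [altPiece_eq_biUnion]
    exact (Finset.eventuallyEq_iUnion _ fun i _ => Ioc_ae_eq_Icc).symm
  have hdisj : Pairwise (Function.onFun Disjoint
      fun i => Ioc (extCuts k c i) (extCuts k c (i + 1))) :=
    hc.extCuts_monotone.pairwise_disjoint_on_Ioc_succ
  rw [pieceVal, setIntegral_congr_set hIoc, integral_biUnion_finset _
    (fun _ _ => measurableSet_Ioc) (hdisj.set_pairwise _)]
  · refine Finset.sum_congr rfl fun i _ => ?_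
    rw [intervalIntegral.integral_of_le (hc.extCuts_monotone i.le_succ)]
  · exact fun i _ => hv.integrableOn.mono_set <| Ioc_subset_Icc_self.trans <|
      Icc_subset_Icc (hc.extCuts_mem_Icc i).1 (hc.extCuts_mem_Icc (i + 1)).2

theorem pieceVal_altPiece_not (hv : IsValueDensity δ Δ v) (hc : ValidCuts k c) (b : Bool) :
    pieceVal v (altPiece k c (!b)) = 1 - pieceVal v (altPiece k c b) := by
  have hnot : pieceIndices k (!b) =
      {i ∈ Finset.range (k + 1) | ¬ decide (i % 2 = 0) = b} := by
    simp only [pieceIndices, Bool.eq_not]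
  rw [eq_sub_iff_add_eq', pieceVal_altPiece hv hc, pieceVal_altPiece hv hc, hnot, pieceIndices,
    Finset.sum_filter_add_sum_filter_not, intervalIntegral.sum_integral_adjacent_intervals
      fun i _ => hv.intervalIntegrable (hc.extCuts_mem_Icc i) (hc.extCuts_mem_Icc (i + 1)),
    extCuts_zero, extCuts_of_lt k.lt_succ_self, hv.integral_zero_one]

theorem pieceVal_altPiece_nonneg (hv : IsValueDensity 0 Δ v) (hc : ValidCuts k c) (b : Bool) :
    0 ≤ pieceVal v (altPiece k c b) := by
  rw [pieceVal_altPiece hv hc]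
  exact Finset.sum_nonneg fun i _ => hv.integral_nonneg (hc.extCuts_mem_Icc i).1
    (hc.extCuts_monotone i.le_succ) (hc.extCuts_mem_Icc (i + 1)).2

theorem pieceVal_altPiece_le_one (hv : IsValueDensity 0 Δ v) (hc : ValidCuts k c) (b : Bool) :
    pieceVal v (altPiece k c b) ≤ 1 := by
  have hnonneg := pieceVal_altPiece_nonneg hv hc (!b)
  rw [pieceVal_altPiece_not hv hc] at hnonneg
  linarith

end Pieces

section Rounding

variable {s x y x' y' δ Δ : ℝ} {v : ℝ → ℝ}

/-- `[x', y']` is an inward rounding of `[x, y]` at scale `s`: it is degenerate and replaces a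
short interval, or it is a subinterval whose length is smaller by at least `s` and at most `3 * s`.
A degenerate `[x', y']` need not lie in `[x, y]`, which may contain no grid point. -/
def IsInwardRounding (s x y x' y' : ℝ) : Prop :=
  (x' = y' ∧ y - x ≤ 3 * s) ∨
    (x ≤ x' ∧ x' ≤ y' ∧ y' ≤ y ∧ (x' - x) + (y - y') ∈ Icc s (3 * s))

theorem IsInwardRounding.mul_left {r : ℝ} (hr : 0 ≤ r) (h : IsInwardRounding s x y x' y') :
    IsInwardRounding (r * s) (r * x) (r * y) (r * x') (r * y') := by
  rcases h with ⟨heq, hle⟩ | ⟨hx, hxy, hy, hs, hs'⟩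
  · refine Or.inl ⟨by rw [heq], ?_⟩
    linear_combination mul_le_mul_of_nonneg_left hle hr
  · refine Or.inr ⟨by gcongr, by gcongr, by gcongr, ?_, ?_⟩
    · linear_combination mul_le_mul_of_nonneg_left hs hr
    · linear_combination mul_le_mul_of_nonneg_left hs' hr

theorem isInwardRounding_floor_sub_one (hy : 0 ≤ y) :
    IsInwardRounding 1 0 y 0 ((⌊y⌋₊ - 1 : ℕ) : ℝ) := by
  have hfloor := Nat.floor_le hy
  have hlt := Nat.lt_floor_add_one y
  rcases Nat.lt_or_ge ⌊y⌋₊ 1 with h | h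
  · rw [Nat.lt_one_iff.1 h, Nat.cast_zero] at hlt
    exact Or.inl ⟨by simp [Nat.lt_one_iff.1 h], by linarith⟩
  · have hone : (1 : ℝ) ≤ ⌊y⌋₊ := by exact_mod_cast h
    refine Or.inr ?_
    push_cast [h]
    exact ⟨le_rfl, by linarith, by linarith, by linarith, by linarith⟩

theorem isInwardRounding_min_floor_add_two (hx : 0 ≤ x) (hxy : x ≤ y) :
    IsInwardRounding 1 x y ((min (⌊x⌋₊ + 2) ⌊y⌋₊ : ℕ) : ℝ) ⌊y⌋₊ := by
  have hfloor_x := Nat.floor_le hx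
  have hfloor_y := Nat.floor_le (hx.trans hxy)
  have hlt_x := Nat.lt_floor_add_one x
  have hlt_y := Nat.lt_floor_add_one y
  rcases le_total ⌊y⌋₊ (⌊x⌋₊ + 2) with h | h
  · have hcast : (⌊y⌋₊ : ℝ) ≤ ⌊x⌋₊ + 2 := by exact_mod_cast h
    exact Or.inl ⟨by rw [min_eq_right h], by linarith⟩
  · have hcast : (⌊x⌋₊ + 2 : ℝ) ≤ ⌊y⌋₊ := by exact_mod_cast h
    rw [min_eq_left h]
    refine Or.inr ?_
    push_cast
    exact ⟨by linarith, hcast, hfloor_y, by linarith, by linarith⟩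

theorem IsInwardRounding.integral_le (h : IsInwardRounding s x y x' y')
    (hv : IsValueDensity 0 Δ v) (hx : 0 ≤ x) (hxy : x ≤ y) (hy : y ≤ 1) :
    ∫ t in x..y, v t ≤ (∫ t in x'..y', v t) + 3 * s * Δ := by
  have hΔ := hv.le_upper
  rcases h with ⟨rfl, hle⟩ | ⟨hx', hxy', hy', -, hs⟩
  · rw [intervalIntegral.integral_same, zero_add, mul_comm]
    exact (hv.integral_le_mul_sub hx hxy hy).trans (by gcongr)
  · have hadd := hv.integral_eq_add_add hx hx' hxy' hy' hy
    have hleft := hv.integral_le_mul_sub hx hx' (hxy'.trans (hy'.trans hy))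
    have hright := hv.integral_le_mul_sub (hx.trans (hx'.trans hxy')) hy' hy
    linear_combination hadd + hleft + hright + Δ * hs

theorem IsInwardRounding.add_le_integral (h : IsInwardRounding s x y x' y')
    (hv : IsValueDensity δ Δ v) (hδ : 0 ≤ δ) (hx : 0 ≤ x) (hy : y ≤ 1) :
    ∫ t in x'..y', v t = 0 ∨ (∫ t in x'..y', v t) + δ * s ≤ ∫ t in x..y, v t := by
  rcases h with ⟨rfl, -⟩ | ⟨hx', hxy', hy', hs, -⟩
  · exact Or.inl intervalIntegral.integral_same
  · have hadd := hv.integral_eq_add_add hx hx' hxy' hy' hy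
    have hleft := hv.mul_sub_le_integral hx hx' (hxy'.trans (hy'.trans hy))
    have hright := hv.mul_sub_le_integral (hx.trans (hx'.trans hxy')) hy' hy
    right
    linear_combination hleft + hright - hadd + δ * hs

/-- Grid numerators for the points `x 0 = 0 ≤ x 1 ≤ …`, measured in units of the mesh, that round
every interval `[x i, x (i + 1)]` with `decide (i % 2 = 0) = b` inwards. Left endpoints of these
intervals move up by more than a mesh step and right endpoints down to the grid; as `x 0` cannot
move, the interval starting there gives up its extra mesh step at `x 1`. -/
def inwardFloor (x : ℕ → ℝ) (b : Bool) : ℕ → ℕ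
  | 0 => 0
  | i + 1 =>
    if decide (i % 2 = 0) = b then
      if i = 0 then ⌊x 1⌋₊ - 1 else ⌊x (i + 1)⌋₊
    else min (⌊x (i + 1)⌋₊ + 2) ⌊x (i + 2)⌋₊

theorem floor_le_inwardFloor {x : ℕ → ℝ} (hx : Monotone x) (b : Bool) {i : ℕ} (hi : 1 < i) :
    ⌊x i⌋₊ ≤ inwardFloor x b i := by
  obtain ⟨j, rfl⟩ := Nat.exists_eq_add_of_lt hi
  have hfloor : ⌊x (1 + j + 1)⌋₊ ≤ ⌊x (1 + j + 2)⌋₊ := Nat.floor_le_floor (hx (by omega))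
  rw [inwardFloor]
  split_ifs <;> omega

theorem inwardFloor_le_floor_succ {x : ℕ → ℝ} (hx : Monotone x) (b : Bool) (i : ℕ) :
    inwardFloor x b i ≤ ⌊x (i + 1)⌋₊ := by
  rcases i with _ | i
  · exact Nat.zero_le _
  have hfloor : ⌊x (i + 1)⌋₊ ≤ ⌊x (i + 2)⌋₊ := Nat.floor_le_floor (hx (by omega))
  rw [inwardFloor]
  split_ifs with _ hi
  · subst hi
    exact (Nat.sub_le _ _).trans hfloor
  · exact hfloor
  · exact min_le_right _ _

theorem inwardFloor_monotone {x : ℕ → ℝ} (hx : Monotone x) (b : Bool) :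
    Monotone (inwardFloor x b) := by
  refine monotone_nat_of_le_succ fun i => ?_
  rcases i with _ | i
  · exact Nat.zero_le _
  · exact (inwardFloor_le_floor_succ hx b _).trans (floor_le_inwardFloor hx b (by omega))

theorem isInwardRounding_inwardFloor {x : ℕ → ℝ} (hx : Monotone x) (hx0 : x 0 = 0) {b : Bool}
    {i : ℕ} (hi : decide (i % 2 = 0) = b) :
    IsInwardRounding 1 (x i) (x (i + 1)) (inwardFloor x b i) (inwardFloor x b (i + 1)) := by
  have hnonneg : ∀ j, 0 ≤ x j := fun j => hx0.symm.trans_le (hx j.zero_le)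
  rcases i with _ | i
  · rw [hx0, inwardFloor, inwardFloor, if_pos hi, if_pos rfl, Nat.cast_zero]
    exact isInwardRounding_floor_sub_one (hnonneg 1)
  · have hi' : decide (i % 2 = 0) ≠ b := by
      rw [← hi, Ne, decide_eq_decide]
      omega
    simpa only [inwardFloor, if_pos hi, if_neg hi', if_neg i.succ_ne_zero]
      using isInwardRounding_min_floor_add_two (hnonneg (i + 1)) (hx (i + 1).le_succ)

end Rounding

section Grid

variable {k n : ℕ} {c : Fin k → ℝ} {δ Δ : ℝ} {vA vB : ℝ → ℝ}

/-- The cut points `g j / n` on the grid of mesh `1 / n`. -/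
def gridCuts (n : ℕ) (g : Fin k → Fin (n + 1)) : Fin k → ℝ := fun j => (g j : ℕ) / n

theorem extCuts_gridCuts (hn : n ≠ 0) {g : Fin k → Fin (n + 1)} {G : ℕ → ℕ} (h0 : G 0 = 0)
    (hG : ∀ j : Fin k, G (j + 1) = g j) (hlast : G (k + 1) = n) {i : ℕ} (hi : i ≤ k + 1) :
    extCuts k (gridCuts n g) i = G i / n := by
  rcases i with _ | i
  · rw [extCuts_zero, h0, Nat.cast_zero, zero_div]
  rcases (Nat.le_of_succ_le_succ hi).lt_or_eq with hik | rfl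
  · rw [extCuts_succ ⟨i, hik⟩, gridCuts, hG ⟨i, hik⟩]
  · rw [extCuts_of_lt i.lt_succ_self, hlast, div_self (Nat.cast_ne_zero.2 hn)]

theorem validCuts_gridCuts {g : Fin k → Fin (n + 1)} (hg : Monotone g) :
    ValidCuts k (gridCuts n g) := by
  refine ⟨fun i j hij => ?_, fun j => ⟨by unfold gridCuts; positivity, ?_⟩⟩
  · exact div_le_div_of_nonneg_right (Nat.cast_le.2 (hg hij)) n.cast_nonneg
  · exact div_le_one_of_le₀ (Nat.cast_le.2 (g j).is_le) n.cast_nonneg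

/-- The cuts `c'` are valid and round inwards, at scale `s`, every interval of `altPiece k c b`. -/
def RoundsInward (s : ℝ) (b : Bool) (c c' : Fin k → ℝ) : Prop :=
  ValidCuts k c' ∧ ∀ i ∈ pieceIndices k b,
    IsInwardRounding s (extCuts k c i) (extCuts k c (i + 1))
      (extCuts k c' i) (extCuts k c' (i + 1))

theorem exists_gridCuts_roundsInward (hk : k ≠ 0) (hn : n ≠ 0) (hc : ValidCuts k c)
    (b : Bool) :
    ∃ g : Fin k → Fin (n + 1), RoundsInward (1 / n) b c (gridCuts n g) := by
  let x : ℕ → ℝ := fun i => n * extCuts k c i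
  have hx : Monotone x := fun i j hij =>
    mul_le_mul_of_nonneg_left (hc.extCuts_monotone hij) n.cast_nonneg
  have hx0 : x 0 = 0 := by simp only [x, extCuts_zero, mul_zero]
  have hfloor_x : ∀ i, k < i → ⌊x i⌋₊ = n := fun i hi => by
    simp only [x, extCuts_of_lt hi, mul_one, Nat.floor_natCast]
  have hle : ∀ i ≤ k + 1, inwardFloor x b i ≤ n := fun i hi =>
    ((inwardFloor_monotone hx b hi).trans (inwardFloor_le_floor_succ hx b _)).trans_eq
      (hfloor_x _ (by omega))
  have hlast : inwardFloor x b (k + 1) = n :=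
    (hle _ le_rfl).antisymm <| (hfloor_x _ k.lt_succ_self).symm.trans_le <|
      floor_le_inwardFloor hx b (by omega)
  let g : Fin k → Fin (n + 1) := fun j =>
    ⟨inwardFloor x b (j + 1), Nat.lt_succ_of_le (hle _ (by omega))⟩
  have hg : Monotone g := fun i j hij =>
    Fin.mk_le_mk.2 (inwardFloor_monotone hx b (Nat.succ_le_succ hij))
  refine ⟨g, validCuts_gridCuts hg, fun i hi => ?_⟩
  have hik := lt_of_mem_pieceIndices hi
  have hn' : (n : ℝ) ≠ 0 := Nat.cast_ne_zero.2 hn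
  have hround := (isInwardRounding_inwardFloor hx hx0 (Finset.mem_filter.1 hi).2).mul_left
    (r := 1 / n) (by positivity)
  rw [extCuts_gridCuts hn rfl (fun _ => rfl) hlast hik.le,
    extCuts_gridCuts hn rfl (fun _ => rfl) hlast hik]
  simpa only [x, mul_one, one_div, inv_mul_cancel_left₀ hn', ← div_eq_inv_mul] using hround

theorem RoundsInward.pieceVal_le {s : ℝ} {c' : Fin k → ℝ} {b : Bool}
    (hA : IsValueDensity 0 Δ vA) (hs : 0 ≤ s) (hc : ValidCuts k c)
    (h : RoundsInward s b c c') :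
    pieceVal vA (altPiece k c b) ≤ pieceVal vA (altPiece k c' b) + (k + 1) * (3 * s * Δ) := by
  have hΔ := hA.le_upper
  have hcard : ((pieceIndices k b).card : ℝ) ≤ k + 1 := by
    exact_mod_cast (Finset.card_filter_le _ _).trans_eq (Finset.card_range _)
  rw [pieceVal_altPiece hA hc, pieceVal_altPiece hA h.1]
  calc _ ≤ ∑ i ∈ pieceIndices k b,
          ((∫ t in extCuts k c' i..extCuts k c' (i + 1), vA t) + 3 * s * Δ) :=
        Finset.sum_le_sum fun i hi => (h.2 i hi).integral_le hA (hc.extCuts_mem_Icc i).1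
          (hc.extCuts_monotone i.le_succ) (hc.extCuts_mem_Icc (i + 1)).2
    _ ≤ _ := by
        rw [Finset.sum_add_distrib, Finset.sum_const, nsmul_eq_mul]
        gcongr

theorem RoundsInward.pieceVal_add_le {s : ℝ} {c' : Fin k → ℝ} {b : Bool}
    (hB : IsValueDensity δ Δ vB) (hδ : 0 ≤ δ) (hs : 0 ≤ s) (hc : ValidCuts k c)
    (h : RoundsInward s b c c') :
    pieceVal vB (altPiece k c' b) = 0 ∨
      pieceVal vB (altPiece k c' b) + δ * s ≤ pieceVal vB (altPiece k c b) := by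
  have hdich := fun i hi => (h.2 i hi).add_le_integral hB hδ (hc.extCuts_mem_Icc i).1
    (hc.extCuts_mem_Icc (i + 1)).2
  have hle : ∀ i ∈ pieceIndices k b, ∫ t in extCuts k c' i..extCuts k c' (i + 1), vB t ≤
      ∫ t in extCuts k c i..extCuts k c (i + 1), vB t := fun i hi => by
    rcases hdich i hi with hzero | hgain
    · rw [hzero]
      exact (hB.mono_left hδ).integral_nonneg (hc.extCuts_mem_Icc i).1
        (hc.extCuts_monotone i.le_succ) (hc.extCuts_mem_Icc (i + 1)).2
    · exact (le_add_of_nonneg_right (mul_nonneg hδ hs)).trans hgain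
  rw [pieceVal_altPiece hB hc, pieceVal_altPiece hB h.1]
  by_cases hzero : ∀ i ∈ pieceIndices k b, ∫ t in extCuts k c' i..extCuts k c' (i + 1), vB t = 0
  · exact Or.inl (Finset.sum_eq_zero hzero)
  · push Not at hzero
    obtain ⟨j, hj, hj0⟩ := hzero
    right
    rw [← Finset.add_sum_erase _ _ hj, ← Finset.add_sum_erase _ _ hj, add_right_comm]
    exact add_le_add ((hdich j hj).resolve_left hj0)
      (Finset.sum_le_sum fun i hi => hle i (Finset.mem_of_mem_erase hi))

end Grid

section Nets

variable {k n : ℕ} {δ Δ Δ' ε η : ℝ} {vA vB : ℝ → ℝ}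

/-- An offer of Alice: a cut vector together with the piece intended for her. The entries of a
`Hist k` have the same type, and an entry equal to an offer records that Bob refused it, that is,
that he took the piece intended for Alice. -/
abbrev Offer (k : ℕ) := (Fin k → ℝ) × Bool

/-- The value under `v` of the piece that the offer `a` intends for Alice. -/
abbrev offerVal (v : ℝ → ℝ) (a : Offer k) : ℝ := pieceVal v (altPiece k a.1 a.2)

/-- The finite set `S` of offers approximates Alice's Stackelberg problem: every offer that
leaves Bob half of the cake can be replaced by one in `S` that leaves Bob an additional `ε` and
costs Alice at most `η`. -/
def IsSafeNet (vA vB : ℝ → ℝ) (ε η : ℝ) (S : Finset (Offer k)) : Prop :=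
  ∀ a : Offer k, ValidCuts k a.1 → offerVal vB a ≤ 1 / 2 →
    ∃ o ∈ S, offerVal vB o ≤ 1 / 2 - ε ∧ offerVal vA a ≤ offerVal vA o + η

/-- All offers whose cuts are valid and lie on the grid of mesh `1 / n`. -/
def gridOffers (k n : ℕ) : Finset (Offer k) :=
  {a ∈ Finset.univ.image fun p : (Fin k → Fin (n + 1)) × Bool => (gridCuts n p.1, p.2) |
    ValidCuts k a.1}

theorem card_gridOffers_le : (gridOffers k n).card ≤ (n + 1) ^ k * 2 :=
  calc (gridOffers k n).card ≤ Fintype.card ((Fin k → Fin (n + 1)) × Bool) :=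
        (Finset.card_filter_le _ _).trans Finset.card_image_le
    _ = (n + 1) ^ k * 2 := by simp

theorem validCuts_of_mem_gridOffers {a : Offer k} (ha : a ∈ gridOffers k n) : ValidCuts k a.1 :=
  (Finset.mem_filter.1 ha).2

theorem isSafeNet_gridOffers (hk : k ≠ 0) (hn : n ≠ 0) (hA : IsValueDensity 0 Δ vA)
    (hB : IsValueDensity δ Δ' vB) (hδ : 0 ≤ δ) (hδn : δ / n ≤ 1 / 2) :
    IsSafeNet vA vB (δ / n) ((k + 1) * (3 * Δ / n)) (gridOffers k n) := by
  rintro ⟨c, b⟩ hc hfeasible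
  obtain ⟨g, hg⟩ := exists_gridCuts_roundsInward hk hn hc b
  have hs : (0 : ℝ) ≤ 1 / n := by positivity
  refine ⟨(gridCuts n g, b), ?_, ?_, ?_⟩
  · exact Finset.mem_filter.2 ⟨Finset.mem_image_of_mem _ (Finset.mem_univ (g, b)), hg.1⟩
  · rcases hg.pieceVal_add_le hB hδ hs hc with hzero | hgain
    · exact hzero.trans_le (sub_nonneg.2 hδn)
    · rw [mul_one_div] at hgain
      exact le_sub_iff_add_le.2 (hgain.trans hfeasible)
  · exact (hg.pieceVal_le hA hs hc).trans_eq (by ring)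

theorem exists_feasible_offer (hB : IsValueDensity δ Δ' vB) :
    ∃ a : Offer k, ValidCuts k a.1 ∧ offerVal vB a ≤ 1 / 2 := by
  have hsum := pieceVal_altPiece_not (k := k) hB validCuts_zero true
  rcases le_total (offerVal vB (k := k) (0, true)) (1 / 2) with h | h
  · exact ⟨(0, true), validCuts_zero, h⟩
  · exact ⟨(0, false), validCuts_zero, by simp only [Bool.not_true] at hsum; linarith⟩

theorem stackelbergValue_le {M : ℝ} (hB : IsValueDensity δ Δ' vB)
    (hM : ∀ a : Offer k, ValidCuts k a.1 → offerVal vB a ≤ 1 / 2 → offerVal vA a ≤ M) :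
    stackelbergValue k vA vB ≤ M := by
  have hfeasible : ∀ a : Offer k, ValidCuts k a.1 →
      (1 / 2 ≤ pieceVal vB (altPiece k a.1 (!a.2)) ↔ offerVal vB a ≤ 1 / 2) := fun a ha => by
    rw [pieceVal_altPiece_not hB ha]
    constructor <;> intro h <;> linarith
  refine csSup_le ?_ ?_
  · obtain ⟨a, ha, haB⟩ := exists_feasible_offer (k := k) hB
    exact ⟨_, a.1, a.2, ha, (hfeasible a ha).2 haB, rfl⟩
  · rintro u ⟨c, b, hc, hcB, rfl⟩
    exact hM (c, b) hc ((hfeasible (c, b) hc).1 hcB)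

end Nets

section Elimination

variable {k : ℕ} {δ Δ Δ' ε η : ℝ} {vA vB : ℝ → ℝ} {T : ℕ}

/-- The offers in `S` that Bob refused fewer than `m` times in the history `h`. -/
def survivingOffers (S : Finset (Offer k)) (m : ℕ) (h : Hist k) : Finset (Offer k) :=
  {a ∈ S | h.count a < m}

/-- A surviving offer of largest value to Alice, with a dummy value if no offer survives. -/
def bestOffer (vA : ℝ → ℝ) (S : Finset (Offer k)) (m : ℕ) (h : Hist k) : Offer k :=
  if hne : (survivingOffers S m h).Nonempty then
    ((survivingOffers S m h).exists_max_image (offerVal vA) hne).choose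
  else (0, false)

theorem bestOffer_mem {S : Finset (Offer k)} {m : ℕ} {h : Hist k}
    (hne : (survivingOffers S m h).Nonempty) : bestOffer vA S m h ∈ survivingOffers S m h := by
  rw [bestOffer, dif_pos hne]
  exact ((survivingOffers S m h).exists_max_image (offerVal vA) hne).choose_spec.1

theorem offerVal_le_bestOffer {S : Finset (Offer k)} {m : ℕ} {h : Hist k} {a : Offer k}
    (ha : a ∈ survivingOffers S m h) : offerVal vA a ≤ offerVal vA (bestOffer vA S m h) := by
  have hne : (survivingOffers S m h).Nonempty := ⟨a, ha⟩
  rw [bestOffer, dif_pos hne]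
  exact ((survivingOffers S m h).exists_max_image (offerVal vA) hne).choose_spec.2 a ha

theorem validCuts_bestOffer {S : Finset (Offer k)} (hS : ∀ a ∈ S, ValidCuts k a.1) (m : ℕ)
    (h : Hist k) : ValidCuts k (bestOffer vA S m h).1 := by
  by_cases hne : (survivingOffers S m h).Nonempty
  · exact hS _ (Finset.mem_filter.1 (bestOffer_mem hne)).1
  · rw [bestOffer, dif_neg hne]
    exact validCuts_zero

/-- The strategy that always makes the best offer in `S T` refused fewer than `m T` times. -/
def eliminationStrategy (vA : ℝ → ℝ) (S : ℕ → Finset (Offer k)) (m : ℕ → ℕ) : AliceStrategy k :=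
  fun T h => (bestOffer vA (S T) (m T) h).1

/-- The history entry of round `t`. -/
def roundEntry (SA : AliceStrategy k) (SB : BobStrategy k) (T t : ℕ) : Offer k :=
  (roundCuts k SA SB T t, roundChoice k SA SB T t)

theorem count_playHist (SA : AliceStrategy k) (SB : BobStrategy k) (T t : ℕ) (a : Offer k) :
    (playHist k SA SB T t).count a = Nat.count (fun s => roundEntry SA SB T s = a) t := by
  induction t with
  | zero => rw [playHist, List.count_nil, Nat.count_zero]
  | succ t ih =>
    rw [playHist, List.count_append, ih, List.count_singleton, Nat.count_succ]
    simp only [beq_iff_eq]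
    rfl

theorem two_mul_mul_count_le_bobRegret (hB : IsValueDensity δ Δ' vB) (SA : AliceStrategy k)
    (SB : BobStrategy k) {a : Offer k} (ha : ValidCuts k a.1)
    (haB : offerVal vB a ≤ 1 / 2 - ε) :
    2 * ε * (playHist k SA SB T T).count a ≤ bobRegret k vB SA SB T := by
  have hmax : ∀ (c : Fin k → ℝ) (b : Bool), pieceVal vB (altPiece k c b) ≤
      max (pieceVal vB (altPiece k c true)) (pieceVal vB (altPiece k c false)) := by
    rintro c (_ | _)
    exacts [le_max_right _ _, le_max_left _ _]
  have hrefused : 2 * ε ≤ max (pieceVal vB (altPiece k a.1 true))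
      (pieceVal vB (altPiece k a.1 false)) - pieceVal vB (altPiece k a.1 a.2) := by
    have hother := hmax a.1 (!a.2)
    rw [pieceVal_altPiece_not hB ha] at hother
    linarith
  rw [count_playHist, Nat.count_eq_card_filter_range, mul_comm, ← nsmul_eq_mul,
    ← Finset.sum_const, Finset.sum_filter, bobRegret]
  refine Finset.sum_le_sum fun t _ => ?_
  split_ifs with ht
  · obtain ⟨hcuts, hchoice⟩ := Prod.ext_iff.1 ht
    simp only [roundEntry] at hcuts hchoice
    rwa [hcuts, hchoice]
  · exact sub_nonneg.2 (hmax _ _)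

theorem count_playHist_lt (hB : IsValueDensity δ Δ' vB) {SA : AliceStrategy k}
    {SB : BobStrategy k} (hε : 0 < ε) {m : ℕ} (hR : bobRegret k vB SA SB T < 2 * ε * m)
    {a : Offer k} (ha : ValidCuts k a.1) (haB : offerVal vB a ≤ 1 / 2 - ε) {t : ℕ} (ht : t ≤ T) :
    (playHist k SA SB T t).count a < m := by
  have hlt := (two_mul_mul_count_le_bobRegret hB SA SB ha haB).trans_lt hR
  refine lt_of_le_of_lt ?_ (Nat.cast_lt.1 (lt_of_mul_lt_mul_left hlt (by positivity)))
  rw [count_playHist, count_playHist]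
  exact Nat.count_monotone _ ht

theorem count_le_of_forall_lt {P : ℕ → Prop} [DecidablePred P] {m : ℕ}
    (h : ∀ t < T, P t → Nat.count P t < m) : Nat.count P T ≤ m := by
  induction T with
  | zero => simp
  | succ T ih =>
    rw [Nat.count_succ]
    split_ifs with hT
    · exact h T T.lt_succ_self hT
    · exact ih fun t ht => h t (ht.trans T.lt_succ_self)

theorem card_refused_le {S : Finset (Offer k)} {m : ℕ} {SA : AliceStrategy k}
    {SB : BobStrategy k} {o : ℕ → Offer k}
    (ho : ∀ t < T, o t ∈ survivingOffers S m (playHist k SA SB T t)) :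
    {t ∈ Finset.range T | roundEntry SA SB T t = o t}.card ≤ m * S.card := by
  refine Finset.card_le_mul_card_image_of_maps_to (f := o) (fun t ht => ?_) _ fun a _ => ?_
  · exact (Finset.mem_filter.1 (ho t (Finset.mem_range.1 (Finset.mem_filter.1 ht).1))).1
  · rw [Finset.filter_filter, ← Nat.count_eq_card_filter_range]
    refine count_le_of_forall_lt fun t ht hta => ?_
    have hsurvives := (Finset.mem_filter.1 (ho t ht)).2
    rw [hta.2, count_playHist] at hsurvives
    exact (Nat.count_mono_left fun s _ hs => hs.1.trans hs.2).trans_lt hsurvives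

theorem survivingOffers_nonempty {S : Finset (Offer k)} {m : ℕ} {h : Hist k}
    (hB : IsValueDensity δ Δ' vB) (hnet : IsSafeNet vA vB ε η S)
    (hsafe : ∀ a ∈ S, offerVal vB a ≤ 1 / 2 - ε → h.count a < m) :
    (survivingOffers S m h).Nonempty := by
  obtain ⟨a, ha, haB⟩ := exists_feasible_offer (k := k) hB
  obtain ⟨o, ho, hoB, -⟩ := hnet a ha haB
  exact ⟨o, Finset.mem_filter.2 ⟨ho, hsafe o ho hoB⟩⟩

theorem stackelbergValue_le_bestOffer {S : Finset (Offer k)} {m : ℕ} {h : Hist k}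
    (hB : IsValueDensity δ Δ' vB) (hnet : IsSafeNet vA vB ε η S)
    (hsafe : ∀ a ∈ S, offerVal vB a ≤ 1 / 2 - ε → h.count a < m) :
    stackelbergValue k vA vB ≤ offerVal vA (bestOffer vA S m h) + η := by
  refine stackelbergValue_le hB fun a ha haB => ?_
  obtain ⟨o, ho, hoB, hoA⟩ := hnet a ha haB
  have hbest := offerVal_le_bestOffer (vA := vA)
    (Finset.mem_filter.2 ⟨ho, hsafe o ho hoB⟩ : o ∈ survivingOffers S m h)
  linarith

theorem offerVal_sub_received_le (hA : IsValueDensity 0 Δ vA) {o : Offer k}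
    (ho : ValidCuts k o.1) (b : Bool) :
    offerVal vA o - pieceVal vA (altPiece k o.1 (!b)) ≤ if (o.1, b) = o then 1 else 0 := by
  split_ifs with hrefused
  · linarith [pieceVal_altPiece_le_one hA ho o.2, pieceVal_altPiece_nonneg hA ho (!b)]
  · have haccepted : (!b) = o.2 :=
      Bool.not_eq.2 fun hb => hrefused (Prod.ext rfl hb)
    rw [haccepted, sub_self]

theorem aliceRegret_eliminationStrategy_le {S : ℕ → Finset (Offer k)} {m : ℕ → ℕ}
    {SB : BobStrategy k} (hA : IsValueDensity 0 Δ vA) (hB : IsValueDensity δ Δ' vB)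
    (hS : ∀ a ∈ S T, ValidCuts k a.1) (hnet : IsSafeNet vA vB ε η (S T)) (hε : 0 < ε)
    (hR : bobRegret k vB (eliminationStrategy vA S m) SB T < 2 * ε * m T) :
    aliceRegret k vA vB (eliminationStrategy vA S m) SB T ≤ T * η + m T * (S T).card := by
  set SA := eliminationStrategy vA S m
  let o : ℕ → Offer k := fun t => bestOffer vA (S T) (m T) (playHist k SA SB T t)
  have hsafe : ∀ t < T, ∀ a ∈ S T, offerVal vB a ≤ 1 / 2 - ε →
      (playHist k SA SB T t).count a < m T := fun t ht a ha haB =>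
    count_playHist_lt hB hε hR (hS a ha) haB ht.le
  have hrefused : {t ∈ Finset.range T | roundEntry SA SB T t = o t}.card ≤ m T * (S T).card :=
    card_refused_le fun t ht => bestOffer_mem (survivingOffers_nonempty hB hnet (hsafe t ht))
  have hround : ∀ t < T, stackelbergValue k vA vB -
      pieceVal vA (altPiece k (roundCuts k SA SB T t) (!roundChoice k SA SB T t)) ≤
        η + if roundEntry SA SB T t = o t then 1 else 0 := fun t ht => by
    have hreceived := offerVal_sub_received_le hA (validCuts_bestOffer (vA := vA) hS (m T)
      (playHist k SA SB T t)) (roundChoice k SA SB T t)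
    have hbest := stackelbergValue_le_bestOffer hB hnet (hsafe t ht)
    change _ ≤ η + if ((o t).1, roundChoice k SA SB T t) = o t then (1 : ℝ) else 0
    change _ - pieceVal vA (altPiece k (o t).1 _) ≤ _
    linarith
  calc aliceRegret k vA vB SA SB T
      ≤ ∑ t ∈ Finset.range T, (η + if roundEntry SA SB T t = o t then (1 : ℝ) else 0) :=
        Finset.sum_le_sum fun t ht => hround t (Finset.mem_range.1 ht)
    _ = T * η + ({t ∈ Finset.range T | roundEntry SA SB T t = o t}.card : ℝ) := by
        rw [Finset.sum_add_distrib, Finset.sum_const, Finset.card_range, nsmul_eq_mul,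
          Finset.sum_boole]
    _ ≤ T * η + m T * (S T).card := by
        gcongr
        exact_mod_cast hrefused

end Elimination

section Horizon

open Filter Asymptotics

variable {k : ℕ} {δ Δ : ℝ} {vA : ℝ → ℝ}

/-- The number of mesh steps of the grid that Alice uses for horizon `T`, about `log T`. -/
def gridSize (T : ℕ) : ℕ := ⌊Real.log T⌋₊ + 1

/-- The number of refusals after which Alice gives up an offer: it makes the refused rounds, at
most `refusalCap k T` for each of the about `gridSize T ^ k` offers, as cheap as the rounding. -/
def refusalCap (k T : ℕ) : ℕ := ⌈(T : ℝ) / gridSize T ^ (k + 1)⌉₊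

/-- The elimination strategy with the horizon-dependent grid and refusal cap. -/
def gridStrategy (k : ℕ) (vA : ℝ → ℝ) : AliceStrategy k :=
  eliminationStrategy vA (fun T => gridOffers k (gridSize T)) (refusalCap k)

theorem gridSize_pos (T : ℕ) : (0 : ℝ) < gridSize T := Nat.cast_pos.2 (Nat.succ_pos _)

theorem log_le_gridSize (T : ℕ) : Real.log T ≤ gridSize T := by
  rw [gridSize, Nat.cast_succ]
  exact (Nat.lt_floor_add_one _).le

theorem gridSize_le_two_mul_log {T : ℕ} (hT : 1 ≤ Real.log T) :
    (gridSize T : ℝ) ≤ 2 * Real.log T := by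
  have hfloor := Nat.floor_le (zero_le_one.trans hT)
  rw [gridSize, Nat.cast_succ]
  linarith

theorem tendsto_log_natCast : Tendsto (fun T : ℕ => Real.log T) atTop atTop :=
  Real.tendsto_log_atTop.comp tendsto_natCast_atTop_atTop

theorem eventually_gridSize_pow_le (p : ℕ) : ∀ᶠ T : ℕ in atTop, (gridSize T : ℝ) ^ p ≤ T := by
  have hlog := ((Real.isLittleO_pow_log_id_atTop (n := p)).comp_tendsto
    tendsto_natCast_atTop_atTop).bound (show (0 : ℝ) < 1 / 2 ^ p by positivity)
  filter_upwards [hlog, tendsto_log_natCast.eventually_ge_atTop 1] with T hT hT1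
  have hT' : Real.log T ^ p ≤ 1 / 2 ^ p * T := by
    simpa [abs_of_nonneg (zero_le_one.trans hT1)] using hT
  calc (gridSize T : ℝ) ^ p ≤ (2 * Real.log T) ^ p := by
        gcongr
        exact gridSize_le_two_mul_log hT1
    _ = 2 ^ p * Real.log T ^ p := mul_pow _ _ _
    _ ≤ 2 ^ p * (1 / 2 ^ p * T) := by gcongr
    _ = T := by field_simp

theorem eventually_lt_mul_refusalCap (hδ : 0 < δ) {R : ℕ → ℝ}
    (hR : R =o[atTop] fun T : ℕ => (T : ℝ) / Real.log T ^ (k + 2)) :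
    ∀ᶠ T : ℕ in atTop, R T < 2 * (δ / gridSize T) * refusalCap k T := by
  filter_upwards [hR.bound (show 0 < δ / 2 ^ (k + 2) by positivity), eventually_gt_atTop 0,
    tendsto_log_natCast.eventually_ge_atTop 1] with T hRT hT hT1
  have hn := gridSize_pos T
  have hT' : (0 : ℝ) < T := Nat.cast_pos.2 hT
  have hlog : 0 < Real.log T := zero_lt_one.trans_le hT1
  rw [Real.norm_of_nonneg (show 0 ≤ (T : ℝ) / Real.log T ^ (k + 2) by positivity)] at hRT
  calc R T ≤ δ / 2 ^ (k + 2) * (T / Real.log T ^ (k + 2)) := (le_abs_self _).trans hRT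
    _ = δ * (T / (2 * Real.log T) ^ (k + 2)) := by
        rw [mul_pow]
        field_simp
    _ ≤ δ * (T / gridSize T ^ (k + 2)) := by
        gcongr
        exact gridSize_le_two_mul_log hT1
    _ < 2 * (δ * (T / gridSize T ^ (k + 2))) := lt_two_mul_self (by positivity)
    _ = 2 * (δ / gridSize T) * (T / gridSize T ^ (k + 1)) := by
        field_simp
        ring
    _ ≤ 2 * (δ / gridSize T) * refusalCap k T := by
        gcongr
        exact Nat.le_ceil _

theorem refusalCap_mul_card_gridOffers_le {T : ℕ} (hT : (gridSize T : ℝ) ^ (k + 1) ≤ T) :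
    (refusalCap k T * (gridOffers k (gridSize T)).card : ℝ) ≤ 2 ^ (k + 2) * (T / gridSize T) := by
  have hn := gridSize_pos T
  have hn1 : (1 : ℝ) ≤ gridSize T := Nat.one_le_cast.2 (Nat.succ_pos _)
  have hcap : (refusalCap k T : ℝ) ≤ 2 * (T / gridSize T ^ (k + 1)) :=
    Nat.ceil_le_two_mul <| (by norm_num : (2⁻¹ : ℝ) ≤ 1).trans ((one_le_div (by positivity)).2 hT)
  have hcard : ((gridOffers k (gridSize T)).card : ℝ) ≤ (2 * gridSize T) ^ k * 2 :=
    calc _ ≤ ((gridSize T : ℝ) + 1) ^ k * 2 := by exact_mod_cast card_gridOffers_le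
      _ ≤ _ := by
          gcongr
          linarith
  calc _ ≤ 2 * (T / (gridSize T : ℝ) ^ (k + 1)) * ((2 * gridSize T) ^ k * 2) := by gcongr
    _ = 2 ^ (k + 2) * (T / gridSize T) := by
        rw [mul_pow]
        field_simp
        ring

theorem isLittleO_const_mul_rpow_div_log_pow (c : ℝ) {α : ℝ} (hα : α < 1) (p : ℕ) :
    (fun T : ℕ => c * (T : ℝ) ^ α) =o[atTop] fun T : ℕ => (T : ℝ) / Real.log T ^ p := by
  have hlog : (fun x : ℝ => Real.log x ^ p) =o[atTop] fun x => x ^ (1 - α) := by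
    simpa only [Real.rpow_natCast] using
      isLittleO_log_rpow_rpow_atTop (p : ℝ) (sub_pos.2 hα)
  have hreal : (fun x : ℝ => x ^ α) =o[atTop] fun x => x / Real.log x ^ p := by
    refine ((isBigO_refl (fun x : ℝ => x ^ α / Real.log x ^ p) atTop).mul_isLittleO hlog).congr'
      ?_ ?_
    · filter_upwards [Real.tendsto_log_atTop.eventually_gt_atTop 0] with x hx
      rw [div_mul_cancel₀ _ (pow_pos hx p).ne']
    · filter_upwards [eventually_gt_atTop 0] with x hx
      rw [div_mul_eq_mul_div, ← Real.rpow_add hx, add_sub_cancel, Real.rpow_one]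
  exact (hreal.comp_tendsto tendsto_natCast_atTop_atTop).const_mul_left c

theorem two_cut_private_rate_upper_general (hk : k ≠ 0) (hA : IsValueDensity 0 Δ vA) :
    ∃ SA : AliceStrategy k, AliceValid k SA ∧
      ∀ δ : ℝ, 0 < δ → ∀ R : ℕ → ℝ,
        R =o[atTop] (fun T : ℕ => (T : ℝ) / Real.log T ^ (k + 2)) →
        ∀ᶠ T : ℕ in atTop, ∀ (Δ' : ℝ) (vB : ℝ → ℝ), IsValueDensity δ Δ' vB →
          ∀ SB : BobStrategy k, bobRegret k vB SA SB T ≤ R T →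
            aliceRegret k vA vB SA SB T ≤ (3 * (k + 1) * Δ + 2 ^ (k + 2)) * T / Real.log T := by
  refine ⟨gridStrategy k vA, fun T h => validCuts_bestOffer
    (fun a => validCuts_of_mem_gridOffers) _ h, fun δ hδ R hR => ?_⟩
  filter_upwards [eventually_lt_mul_refusalCap hδ hR, eventually_gridSize_pow_le (k + 1),
    tendsto_log_natCast.eventually_ge_atTop (max 1 (2 * δ))] with T hRT hpow hlog
      Δ' vB hB SB hSB
  have hn := gridSize_pos T
  have hδn : δ / gridSize T ≤ 1 / 2 := by
    rw [div_le_iff₀ hn]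
    linarith [(le_max_right _ _).trans (hlog.trans (log_le_gridSize T))]
  have hlog_pos : 0 < Real.log T := zero_lt_one.trans_le ((le_max_left _ _).trans hlog)
  have hΔ := hA.le_upper
  calc aliceRegret k vA vB (gridStrategy k vA) SB T
      ≤ T * ((k + 1) * (3 * Δ / gridSize T)) +
          refusalCap k T * (gridOffers k (gridSize T)).card :=
        aliceRegret_eliminationStrategy_le hA hB (fun a => validCuts_of_mem_gridOffers)
          (isSafeNet_gridOffers hk (Nat.succ_ne_zero _) hA hB hδ.le hδn) (div_pos hδ hn)
          (hSB.trans_lt hRT)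
    _ ≤ T * ((k + 1) * (3 * Δ / gridSize T)) + 2 ^ (k + 2) * (T / gridSize T) :=
        add_le_add le_rfl (refusalCap_mul_card_gridOffers_le hpow)
    _ = (3 * (k + 1) * Δ + 2 ^ (k + 2)) * T / gridSize T := by ring
    _ ≤ (3 * (k + 1) * Δ + 2 ^ (k + 2)) * T / Real.log T := by
        gcongr
        exact log_le_gridSize T

end Horizon

/-- 2 cuts, non-myopic Bob with private learning rate, upper bound:
for every Alice value density there is a deterministic Alice strategy, independent of `α`
and `c`, such that for every `α < 1` and `c > 0` there are `C > 0` and `T₀` with: against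
every Bob value density and every Bob strategy guaranteeing regret at most `c·T'^α` for all
horizons, Alice's Stackelberg regret over any horizon `T ≥ T₀` is at most `C·T/log T`. -/
theorem two_cut_private_rate_upper (δ Δ : ℝ) (hδ : 0 < δ) (hδΔ : δ ≤ Δ) :
    ∀ vA : ℝ → ℝ, IsValueDensity δ Δ vA →
      ∃ SA : AliceStrategy 2, AliceValid 2 SA ∧
        ∀ α : ℝ, α < 1 →
          ∀ c : ℝ, 0 < c →
            ∃ (C : ℝ) (T₀ : ℕ), 0 < C ∧
              ∀ vB : ℝ → ℝ, IsValueDensity δ Δ vB →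
                ∀ SB : BobStrategy 2,
                  BobGuarantees 2 vB SB (fun T' => c * (T' : ℝ) ^ α) →
                  ∀ T : ℕ, T₀ ≤ T →
                    aliceRegret 2 vA vB SA SB T ≤ C * T / Real.log T := by
  intro vA hA
  obtain ⟨SA, hvalid, hSA⟩ :=
    two_cut_private_rate_upper_general two_ne_zero (hA.mono_left hδ.le)
  refine ⟨SA, hvalid, fun α hα c _ => ?_⟩
  obtain ⟨T₀, hT₀⟩ := Filter.eventually_atTop.1
    (hSA δ hδ _ (isLittleO_const_mul_rpow_div_log_pow c hα (2 + 2)))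
  have hΔ : 0 < Δ := hδ.trans_le hδΔ
  exact ⟨_, T₀, by positivity, fun vB hB SB hSB T hT => hT₀ T hT Δ vB hB SB (hSB SA T)⟩

end
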